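/- Let H, K be finite-dimensional Hilbert spaces, ρ a density operator on H, σ a density operator on K, V unitary on H⊗K, (Q_n)_{n∈N} mutually orthogonal projections on K summing to the identity. Define ρ₁₂ := Σ_n (1⊗Q_n) V (ρ⊗σ) V* (1⊗Q_n), ρ₁ := Tr_K ρ₁₂, ρ₂ := Tr_H ρ₁₂, and let S denote von Neumann entropy. Then S(ρ) − S(ρ₁) ≤ S(ρ₂) − S(σ). -/

import Mathlib

open Matrix Kronecker ComplexOrder

noncomputable def ptraceK {dH dK : Type*} [Fintype dK]
    (M : Matrix (dH × dK) (dH × dK) ℂ) : Matrix dH dH ℂ :=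
  Matrix.of fun a b => ∑ j, M (a, j) (b, j)

noncomputable def ptraceH {dH dK : Type*} [Fintype dH]
    (M : Matrix (dH × dK) (dH × dK) ℂ) : Matrix dK dK ℂ :=
  Matrix.of fun a b => ∑ i, M (i, a) (i, b)

def IsDensity {d : Type*} [Fintype d] (ρ : Matrix d d ℂ) : Prop :=
  ρ.PosSemidef ∧ ρ.trace = 1

open scoped Classical in
/-- Von Neumann entropy, computed from the eigenvalues of a Hermitian matrix. -/
noncomputable def vNE {d : Type*} [Fintype d] [DecidableEq d] (ρ : Matrix d d ℂ) : ℝ :=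
  if h : ρ.IsHermitian then ∑ i, Real.negMulLog (h.eigenvalues i) else 0

/-! The state `ρ₁₂` is the image of `ρ ⊗ σ` under a positive map that preserves both the trace and
the identity. The eigenvalues of such an image are the mean values of the original ones under a
doubly stochastic matrix, so Jensen's inequality for `-x log x` shows that the entropy does not
decrease. Reading `ρ₁₂` in the product of the eigenbases of its two marginals gives a joint
probability distribution whose marginals are the two spectra, and subadditivity reduces to
Gibbs' inequality: `S(ρ) + S(σ) = S(ρ ⊗ σ) ≤ S(ρ₁₂) ≤ S(ρ₁) + S(ρ₂)`. -/

section Shannon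

open Real

variable {α β : Type*} [Fintype α] [Fintype β]

lemma negMulLog_le_neg_mul_log_add_sub {p q : ℝ} (hp : 0 ≤ p) (hq : 0 ≤ q) (h : q = 0 → p = 0) :
    negMulLog p ≤ -p * log q + (q - p) := by
  rcases hp.eq_or_lt with rfl | hp'
  · simpa using hq
  have hq' : 0 < q := hq.lt_of_ne' (mt h hp'.ne')
  have hlog : p * (log q - log p) ≤ q - p := by
    calc p * (log q - log p) = p * log (q / p) := by rw [log_div hq'.ne' hp'.ne']
      _ ≤ p * (q / p - 1) := by gcongr; exact log_le_sub_one_of_pos (div_pos hq' hp')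
      _ = q - p := by field_simp
  rw [negMulLog]
  linarith

lemma sum_negMulLog_le_sum_neg_mul_log {p q : α → ℝ} (hp : ∀ x, 0 ≤ p x) (hq : ∀ x, 0 ≤ q x)
    (h : ∀ x, q x = 0 → p x = 0) (hsum : ∑ x, q x ≤ ∑ x, p x) :
    ∑ x, negMulLog (p x) ≤ ∑ x, -p x * log (q x) := by
  calc ∑ x, negMulLog (p x) ≤ ∑ x, (-p x * log (q x) + (q x - p x)) :=
        Finset.sum_le_sum fun x _ => negMulLog_le_neg_mul_log_add_sub (hp x) (hq x) (h x)
    _ = ∑ x, -p x * log (q x) + (∑ x, q x - ∑ x, p x) := by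
        rw [Finset.sum_add_distrib, Finset.sum_sub_distrib]
    _ ≤ ∑ x, -p x * log (q x) := by linarith

lemma sum_negMulLog_le_add_marginals {p : α × β → ℝ} (hp : ∀ x, 0 ≤ p x) (hsum : ∑ x, p x = 1) :
    ∑ x, negMulLog (p x) ≤
      ∑ i, negMulLog (∑ j, p (i, j)) + ∑ j, negMulLog (∑ i, p (i, j)) := by
  set a : α → ℝ := fun i => ∑ j, p (i, j) with ha
  set b : β → ℝ := fun j => ∑ i, p (i, j) with hb
  have ha_nonneg (i) : 0 ≤ a i := Finset.sum_nonneg fun j _ => hp (i, j)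
  have hb_nonneg (j) : 0 ≤ b j := Finset.sum_nonneg fun i _ => hp (i, j)
  have hpa {i} (h : a i = 0) (j) : p (i, j) = 0 :=
    (Finset.sum_eq_zero_iff_of_nonneg fun j _ => hp (i, j)).1 h j (Finset.mem_univ j)
  have hpb {j} (h : b j = 0) (i) : p (i, j) = 0 :=
    (Finset.sum_eq_zero_iff_of_nonneg fun i _ => hp (i, j)).1 h i (Finset.mem_univ i)
  have hab : ∑ x : α × β, a x.1 * b x.2 = ∑ x, p x := by
    have ha_sum : ∑ i, a i = 1 := by rw [← hsum, Fintype.sum_prod_type]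
    have hb_sum : ∑ j, b j = 1 := by rw [← hsum, Fintype.sum_prod_type_right]
    rw [Fintype.sum_prod_type, ← Finset.sum_mul_sum, ha_sum, hb_sum, hsum, one_mul]
  have hlog (x : α × β) : -p x * log (a x.1 * b x.2) =
      -p x * log (a x.1) + -p x * log (b x.2) := by
    by_cases hx : p x = 0
    · simp [hx]
    · rw [log_mul (mt (hpa · x.2) hx) (mt (hpb · x.1) hx), mul_add]
  calc ∑ x, negMulLog (p x) ≤ ∑ x : α × β, -p x * log (a x.1 * b x.2) :=
        sum_negMulLog_le_sum_neg_mul_log hp (fun x => mul_nonneg (ha_nonneg _) (hb_nonneg _))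
          (fun x hx => (mul_eq_zero.1 hx).elim (hpa · x.2) (hpb · x.1)) hab.le
    _ = ∑ i, ∑ j, -p (i, j) * log (a i) + ∑ j, ∑ i, -p (i, j) * log (b j) := by
        rw [Finset.sum_congr rfl fun x _ => hlog x, Finset.sum_add_distrib, Fintype.sum_prod_type,
          Fintype.sum_prod_type_right]
    _ = ∑ i, negMulLog (a i) + ∑ j, negMulLog (b j) := by
        simp only [← Finset.sum_mul, Finset.sum_neg_distrib, negMulLog, ha, hb]

lemma sum_negMulLog_le_sum_negMulLog_mulVec {D : Matrix β α ℝ} (hD : ∀ i j, 0 ≤ D i j)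
    (hrow : ∀ i, ∑ j, D i j = 1) (hcol : ∀ j, ∑ i, D i j = 1) {x : α → ℝ} (hx : ∀ j, 0 ≤ x j) :
    ∑ j, negMulLog (x j) ≤ ∑ i, negMulLog ((D *ᵥ x) i) := by
  calc ∑ j, negMulLog (x j) = ∑ i, ∑ j, D i j * negMulLog (x j) := by
        rw [Finset.sum_comm]
        simp only [← Finset.sum_mul, hcol, one_mul]
    _ ≤ ∑ i, negMulLog ((D *ᵥ x) i) := Finset.sum_le_sum fun i _ =>
        concaveOn_negMulLog.le_map_sum (fun j _ => hD i j) (hrow i) fun j _ => Set.mem_Ici.2 (hx j)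

end Shannon

section Spectral

variable {m n : Type*} [Fintype m] [DecidableEq m] [Fintype n] [DecidableEq n]
  {A : Matrix m m ℂ} {B : Matrix n n ℂ}

lemma vNE_eq_sum_eigenvalues (hA : A.IsHermitian) :
    vNE A = ∑ i, Real.negMulLog (hA.eigenvalues i) :=
  dif_pos hA

lemma eq_eigenvectorUnitary_mul_diagonal_mul (hA : A.IsHermitian) :
    A = hA.eigenvectorUnitary.1 * diagonal (fun i => (hA.eigenvalues i : ℂ)) *
      hA.eigenvectorUnitary.1ᴴ := by
  simpa only [Unitary.conjStarAlgAut_apply] using! hA.spectral_theorem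

lemma eigenvectorUnitary_conj_eq_diagonal (hA : A.IsHermitian) :
    star hA.eigenvectorUnitary.1 * A * hA.eigenvectorUnitary.1 =
      diagonal fun i => (hA.eigenvalues i : ℂ) := by
  simpa only [Unitary.conjStarAlgAut_star_apply] using! hA.conjStarAlgAut_star_eigenvectorUnitary

lemma vNE_unitary_conj_diagonal {U : Matrix m m ℂ} (hU : U ∈ unitaryGroup m ℂ) (x : m → ℝ) :
    vNE (U * diagonal (fun i => (x i : ℂ)) * Uᴴ) = ∑ i, Real.negMulLog (x i) := by
  have hM : (U * diagonal (fun i => (x i : ℂ)) * Uᴴ).IsHermitian :=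
    isHermitian_mul_mul_conjTranspose U (isHermitian_diagonal_of_self_adjoint _
      (funext fun i => Complex.conj_ofReal (x i)))
  have hroots : Finset.univ.val.map (fun i => (hM.eigenvalues i : ℂ)) =
      Finset.univ.val.map fun i => (x i : ℂ) := by
    calc _ = (U * diagonal (fun i => (x i : ℂ)) * Uᴴ).charpoly.roots :=
          hM.roots_charpoly_eq_eigenvalues.symm
      _ = (diagonal fun i => (x i : ℂ)).charpoly.roots := by
          rw [charpoly_mul_comm, ← Matrix.mul_assoc, ← star_eq_conjTranspose,
            mem_unitaryGroup_iff'.1 hU, Matrix.one_mul]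
      _ = _ := by
          rw [charpoly_diagonal,
            ← Polynomial.roots_multiset_prod_X_sub_C (Finset.univ.val.map fun i => (x i : ℂ)),
            Multiset.map_map]
          rfl
  have h := congrArg (fun s => (s.map fun z => Real.negMulLog z.re).sum) hroots
  simpa [vNE_eq_sum_eigenvalues hM] using h

lemma vNE_kronecker (hA : A.IsHermitian) (hB : B.IsHermitian) :
    vNE (A ⊗ₖ B) = B.trace.re * vNE A + A.trace.re * vNE B := by
  set U := hA.eigenvectorUnitary
  set W := hB.eigenvectorUnitary
  have hAB : A ⊗ₖ B = (U.1 ⊗ₖ W.1) *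
      diagonal (fun q => ((hA.eigenvalues q.1 * hB.eigenvalues q.2 : ℝ) : ℂ)) *
      (U.1 ⊗ₖ W.1)ᴴ := by
    conv_lhs => rw [eq_eigenvectorUnitary_mul_diagonal_mul hA,
      eq_eigenvectorUnitary_mul_diagonal_mul hB]
    simp only [mul_kronecker_mul, conjTranspose_kronecker, diagonal_kronecker_diagonal,
      Complex.ofReal_mul, U, W]
  rw [hAB, vNE_unitary_conj_diagonal (kronecker_mem_unitary U.2 W.2), vNE_eq_sum_eigenvalues hA,
    vNE_eq_sum_eigenvalues hB, hA.trace_eq_sum_eigenvalues, hB.trace_eq_sum_eigenvalues]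
  simp only [Real.negMulLog_mul, Finset.sum_add_distrib, Fintype.sum_prod_type, Finset.sum_mul_sum,
    Complex.re_sum, Complex.coe_algebraMap, Complex.ofReal_re]
  rw [Finset.sum_comm]

/-- The rank-one orthogonal projection onto the line spanned by the `j`-th eigenvector of a
Hermitian matrix; these projections resolve the matrix into its spectral sum. -/
noncomputable def eigenProj (hA : A.IsHermitian) (j : m) : Matrix m m ℂ :=
  hA.eigenvectorUnitary.1 * diagonal (Pi.single j 1) * hA.eigenvectorUnitary.1ᴴ

lemma posSemidef_eigenProj (hA : A.IsHermitian) (j : m) : (eigenProj hA j).PosSemidef :=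
  (PosSemidef.diagonal (Pi.single_nonneg.2 zero_le_one)).mul_mul_conjTranspose_same _

lemma trace_eigenProj (hA : A.IsHermitian) (j : m) : (eigenProj hA j).trace = 1 := by
  rw [eigenProj, trace_mul_cycle, ← star_eq_conjTranspose, Unitary.coe_star_mul_self,
    Matrix.one_mul, trace_diagonal, Finset.sum_pi_single', if_pos (Finset.mem_univ j)]

lemma sum_smul_eigenProj (hA : A.IsHermitian) (c : m → ℂ) :
    ∑ j, c j • eigenProj hA j =
      hA.eigenvectorUnitary.1 * diagonal c * hA.eigenvectorUnitary.1ᴴ := by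
  have hc : diagonal c = ∑ j, c j • diagonal (Pi.single j (1 : ℂ)) := by
    ext i k
    simp [Matrix.sum_apply, diagonal_apply, Pi.single_apply]
  simp only [hc, eigenProj, Finset.mul_sum, Finset.sum_mul, Matrix.mul_smul, Matrix.smul_mul]

lemma sum_eigenProj (hA : A.IsHermitian) : ∑ j, eigenProj hA j = 1 := by
  simpa [← star_eq_conjTranspose] using sum_smul_eigenProj hA 1

lemma sum_eigenvalues_smul_eigenProj (hA : A.IsHermitian) :
    ∑ j, (hA.eigenvalues j : ℂ) • eigenProj hA j = A := by
  rw [sum_smul_eigenProj, ← eq_eigenvectorUnitary_mul_diagonal_mul]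

end Spectral

section Bistochastic

variable {m n l N : Type*} [Fintype m] [Fintype N]

/-- The map `A ↦ ∑ i, K i * A * (K i)ᴴ` with Kraus operators `K i`; it covers unitary conjugation
(one operator) and Lüders operations (orthogonal projections). -/
noncomputable def krausMap (K : N → Matrix n m ℂ) : Matrix m m ℂ →ₗ[ℂ] Matrix n n ℂ where
  toFun A := ∑ i, K i * A * (K i)ᴴ
  map_add' A B := by simp only [Matrix.mul_add, Matrix.add_mul, Finset.sum_add_distrib]
  map_smul' c A := by
    simp only [Matrix.mul_smul, Matrix.smul_mul, Finset.smul_sum, RingHom.id_apply]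

lemma krausMap_apply (K : N → Matrix n m ℂ) (A : Matrix m m ℂ) :
    krausMap K A = ∑ i, K i * A * (K i)ᴴ := rfl

variable [DecidableEq m] [Fintype n] [DecidableEq n] [Fintype l] [DecidableEq l]

/-- A linear map of matrices is bistochastic if it is positive, unital and trace-preserving: the
noncommutative analogue of a doubly stochastic matrix. Complete positivity is not required, and the
source and target may be indexed by different types. -/
structure IsBistochastic (Φ : Matrix m m ℂ →ₗ[ℂ] Matrix n n ℂ) : Prop where
  map_posSemidef : ∀ {A}, A.PosSemidef → (Φ A).PosSemidef
  map_one : Φ 1 = 1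
  trace_map : ∀ A, (Φ A).trace = A.trace

lemma isBistochastic_krausMap {K : N → Matrix n m ℂ} (hunital : ∑ i, K i * (K i)ᴴ = 1)
    (htrace : ∑ i, (K i)ᴴ * K i = 1) : IsBistochastic (krausMap K) where
  map_posSemidef hA := posSemidef_sum _ fun i _ => hA.mul_mul_conjTranspose_same (K i)
  map_one := by simpa only [krausMap_apply, Matrix.mul_one] using hunital
  trace_map A := by
    simp only [krausMap_apply, trace_sum, fun i => trace_mul_cycle (K i) A (K i)ᴴ]
    rw [← trace_sum, ← Finset.sum_mul, htrace, Matrix.one_mul]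

lemma isBistochastic_unitary_conj {U : Matrix m m ℂ} (hU : U ∈ unitaryGroup m ℂ) :
    IsBistochastic (krausMap fun _ : Unit => U) :=
  isBistochastic_krausMap
    (by simpa [star_eq_conjTranspose] using mem_unitaryGroup_iff.1 hU)
    (by simpa [star_eq_conjTranspose] using mem_unitaryGroup_iff'.1 hU)

lemma isBistochastic_luders {P : N → Matrix m m ℂ} (hP : ∀ i, IsStarProjection (P i))
    (hsum : ∑ i, P i = 1) : IsBistochastic (krausMap P) := by
  have hPP (i) : P i * P i = P i := (hP i).isIdempotentElem
  have hPh (i) : (P i)ᴴ = P i := (hP i).isSelfAdjoint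
  exact isBistochastic_krausMap (by simpa only [hPh, hPP]) (by simpa only [hPh, hPP])

namespace IsBistochastic

variable {Φ : Matrix m m ℂ →ₗ[ℂ] Matrix n n ℂ} {Ψ : Matrix n n ℂ →ₗ[ℂ] Matrix l l ℂ}
  {A : Matrix m m ℂ}

lemma comp (hΨ : IsBistochastic Ψ) (hΦ : IsBistochastic Φ) : IsBistochastic (Ψ ∘ₗ Φ) where
  map_posSemidef hA := hΨ.map_posSemidef (hΦ.map_posSemidef hA)
  map_one := by rw [LinearMap.comp_apply, hΦ.map_one, hΨ.map_one]
  trace_map A := by rw [LinearMap.comp_apply, hΨ.trace_map, hΦ.trace_map]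

lemma isDensity_map (hΦ : IsBistochastic Φ) (hA : IsDensity A) : IsDensity (Φ A) :=
  ⟨hΦ.map_posSemidef hA.1, (hΦ.trace_map A).trans hA.2⟩

lemma vNE_le_sum_negMulLog_diag (hΦ : IsBistochastic Φ) (hA : A.PosSemidef) :
    vNE A ≤ ∑ i, Real.negMulLog (Φ A i i).re := by
  have hAh := hA.isHermitian
  let D : Matrix n m ℝ := of fun i j => (Φ (eigenProj hAh j) i i).re
  have hD (i j) : 0 ≤ D i j :=
    (Complex.nonneg_iff.1 (hΦ.map_posSemidef (posSemidef_eigenProj hAh j)).diag_nonneg).1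
  have hrow (i) : ∑ j, D i j = 1 := by
    simp only [D, of_apply, ← Complex.re_sum, ← Matrix.sum_apply, ← map_sum, sum_eigenProj,
      hΦ.map_one, one_apply_eq, Complex.one_re]
  have hcol (j) : ∑ i, D i j = 1 := by
    have h := congrArg Complex.re ((hΦ.trace_map _).trans (trace_eigenProj hAh j))
    simpa [Matrix.trace, D] using h
  have hdiag (i) : (Φ A i i).re = (D *ᵥ hAh.eigenvalues) i := by
    conv_lhs => rw [← sum_eigenvalues_smul_eigenProj hAh]
    simp [D, mulVec, dotProduct, Matrix.sum_apply, mul_comm]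
  simp only [hdiag, vNE_eq_sum_eigenvalues hAh]
  exact sum_negMulLog_le_sum_negMulLog_mulVec hD hrow hcol hA.eigenvalues_nonneg

lemma vNE_le_vNE_map (hΦ : IsBistochastic Φ) (hA : A.PosSemidef) : vNE A ≤ vNE (Φ A) := by
  have hΦA := (hΦ.map_posSemidef hA).isHermitian
  set U := hΦA.eigenvectorUnitary
  have hconj := isBistochastic_unitary_conj (Unitary.star_mem U.2)
  have hdiag : krausMap (fun _ : Unit => star U.1) (Φ A) =
      diagonal fun i => (hΦA.eigenvalues i : ℂ) := by
    simpa [krausMap_apply, star_eq_conjTranspose] using eigenvectorUnitary_conj_eq_diagonal hΦA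
  simpa [hdiag, vNE_eq_sum_eigenvalues hΦA] using (hconj.comp hΦ).vNE_le_sum_negMulLog_diag hA

end IsBistochastic

end Bistochastic

section PartialTrace

variable {dH dK : Type*}

lemma isHermitian_ptraceK [Fintype dK] {M : Matrix (dH × dK) (dH × dK) ℂ} (hM : M.IsHermitian) :
    (ptraceK M).IsHermitian := by
  ext i k
  simp only [ptraceK, conjTranspose_apply, of_apply, star_sum, hM.apply]

lemma isHermitian_ptraceH [Fintype dH] {M : Matrix (dH × dK) (dH × dK) ℂ} (hM : M.IsHermitian) :
    (ptraceH M).IsHermitian := by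
  ext j l
  simp only [ptraceH, conjTranspose_apply, of_apply, star_sum, hM.apply]

variable [Fintype dH] [Fintype dK]

lemma trace_ptraceK_mul [DecidableEq dK] (M : Matrix (dH × dK) (dH × dK) ℂ) (X : Matrix dH dH ℂ) :
    (ptraceK M * X).trace = (M * (X ⊗ₖ (1 : Matrix dK dK ℂ))).trace := by
  simp only [Matrix.trace, diag_apply, mul_apply, ptraceK, of_apply, kronecker_apply, one_apply,
    Fintype.sum_prod_type, mul_ite, mul_one, mul_zero, Finset.sum_ite_eq', Finset.mem_univ, if_true,
    Finset.sum_mul]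
  exact Finset.sum_congr rfl fun _ _ => Finset.sum_comm

lemma trace_ptraceH_mul [DecidableEq dH] (M : Matrix (dH × dK) (dH × dK) ℂ) (Y : Matrix dK dK ℂ) :
    (ptraceH M * Y).trace = (M * ((1 : Matrix dH dH ℂ) ⊗ₖ Y)).trace := by
  simp only [Matrix.trace, diag_apply, mul_apply, ptraceH, of_apply, kronecker_apply, one_apply,
    Fintype.sum_prod_type_right, ite_mul, one_mul, zero_mul, mul_ite, mul_zero, Finset.sum_ite_eq',
    Finset.mem_univ, if_true, Finset.sum_mul]
  exact Finset.sum_congr rfl fun _ _ => Finset.sum_comm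

lemma ptraceK_kronecker_mul_mul [DecidableEq dK] (A C : Matrix dH dH ℂ) {B D : Matrix dK dK ℂ}
    (hDB : D * B = 1) (M : Matrix (dH × dK) (dH × dK) ℂ) :
    ptraceK ((A ⊗ₖ B) * M * (C ⊗ₖ D)) = A * ptraceK M * C := by
  refine ext_iff_trace_mul_right.2 fun X => ?_
  calc (ptraceK ((A ⊗ₖ B) * M * (C ⊗ₖ D)) * X).trace
      = (M * ((C ⊗ₖ D) * (X ⊗ₖ 1) * (A ⊗ₖ B))).trace := by
        rw [trace_ptraceK_mul, Matrix.mul_assoc, Matrix.mul_assoc, trace_mul_comm, Matrix.mul_assoc]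
    _ = (ptraceK M * (C * X * A)).trace := by
        rw [trace_ptraceK_mul, ← mul_kronecker_mul, ← mul_kronecker_mul, Matrix.mul_one, hDB]
    _ = (A * ptraceK M * C * X).trace := by
        rw [← Matrix.mul_assoc, trace_mul_comm]; simp only [Matrix.mul_assoc]

lemma ptraceH_kronecker_mul_mul [DecidableEq dH] {A C : Matrix dH dH ℂ} (B D : Matrix dK dK ℂ)
    (hCA : C * A = 1) (M : Matrix (dH × dK) (dH × dK) ℂ) :
    ptraceH ((A ⊗ₖ B) * M * (C ⊗ₖ D)) = B * ptraceH M * D := by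
  refine ext_iff_trace_mul_right.2 fun Y => ?_
  calc (ptraceH ((A ⊗ₖ B) * M * (C ⊗ₖ D)) * Y).trace
      = (M * ((C ⊗ₖ D) * (1 ⊗ₖ Y) * (A ⊗ₖ B))).trace := by
        rw [trace_ptraceH_mul, Matrix.mul_assoc, Matrix.mul_assoc, trace_mul_comm, Matrix.mul_assoc]
    _ = (ptraceH M * (D * Y * B)).trace := by
        rw [trace_ptraceH_mul, ← mul_kronecker_mul, ← mul_kronecker_mul, Matrix.mul_one, hCA]
    _ = (B * ptraceH M * D * Y).trace := by
        rw [← Matrix.mul_assoc, trace_mul_comm]; simp only [Matrix.mul_assoc]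

variable [DecidableEq dH] [DecidableEq dK]

lemma vNE_le_vNE_ptraceK_add_vNE_ptraceH {M : Matrix (dH × dK) (dH × dK) ℂ} (hM : IsDensity M) :
    vNE M ≤ vNE (ptraceK M) + vNE (ptraceH M) := by
  have hK := isHermitian_ptraceK hM.1.isHermitian
  have hH := isHermitian_ptraceH hM.1.isHermitian
  set U := hK.eigenvectorUnitary
  set W := hH.eigenvectorUnitary
  set Φ := krausMap fun _ : Unit => star (U.1 ⊗ₖ W.1)
  have hΦ : IsBistochastic Φ :=
    isBistochastic_unitary_conj (Unitary.star_mem (kronecker_mem_unitary U.2 W.2))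
  have hΦM : Φ M = (star U.1 ⊗ₖ star W.1) * M * (U.1 ⊗ₖ W.1) := by
    simp [Φ, krausMap_apply, star_eq_conjTranspose, conjTranspose_kronecker]
  obtain ⟨hpos, htrace⟩ := hΦ.isDensity_map hM
  have hmarginal_H (i) : ∑ j, (Φ M (i, j) (i, j)).re = hK.eigenvalues i := by
    have h : ptraceK (Φ M) = diagonal fun i => (hK.eigenvalues i : ℂ) := by
      rw [hΦM, ptraceK_kronecker_mul_mul _ _ (mem_unitaryGroup_iff.1 W.2),
        eigenvectorUnitary_conj_eq_diagonal hK]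
    simpa [ptraceK] using congrArg Complex.re (congrFun₂ h i i)
  have hmarginal_K (j) : ∑ i, (Φ M (i, j) (i, j)).re = hH.eigenvalues j := by
    have h : ptraceH (Φ M) = diagonal fun j => (hH.eigenvalues j : ℂ) := by
      rw [hΦM, ptraceH_kronecker_mul_mul _ _ (mem_unitaryGroup_iff.1 U.2),
        eigenvectorUnitary_conj_eq_diagonal hH]
    simpa [ptraceH] using congrArg Complex.re (congrFun₂ h j j)
  calc vNE M ≤ ∑ q, Real.negMulLog (Φ M q q).re := hΦ.vNE_le_sum_negMulLog_diag hM.1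
    _ ≤ ∑ i, Real.negMulLog (∑ j, (Φ M (i, j) (i, j)).re) +
        ∑ j, Real.negMulLog (∑ i, (Φ M (i, j) (i, j)).re) :=
      sum_negMulLog_le_add_marginals (fun q => (Complex.nonneg_iff.1 hpos.diag_nonneg).1)
        (by simpa [Matrix.trace] using congrArg Complex.re htrace)
    _ = vNE (ptraceK M) + vNE (ptraceH M) := by
      simp only [hmarginal_H, hmarginal_K, vNE_eq_sum_eigenvalues hK, vNE_eq_sum_eigenvalues hH]

end PartialTrace

namespace IsDensity

variable {m n : Type*} [Fintype m] [Fintype n] {ρ : Matrix m m ℂ} {σ : Matrix n n ℂ}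

lemma kronecker (hρ : IsDensity ρ) (hσ : IsDensity σ) : IsDensity (ρ ⊗ₖ σ) :=
  ⟨hρ.1.kronecker hσ.1, by rw [trace_kronecker, hρ.2, hσ.2, one_mul]⟩

lemma vNE_kronecker_eq_add [DecidableEq m] [DecidableEq n] (hρ : IsDensity ρ) (hσ : IsDensity σ) :
    vNE (ρ ⊗ₖ σ) = vNE ρ + vNE σ := by
  simp [vNE_kronecker hρ.1.isHermitian hσ.1.isHermitian, hρ.2, hσ.2]

end IsDensity

lemma isStarProjection_one_kronecker {m n : Type*} [Fintype m] [DecidableEq m] [Fintype n]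
    {P : Matrix n n ℂ} (hP : IsStarProjection P) :
    IsStarProjection ((1 : Matrix m m ℂ) ⊗ₖ P) where
  isIdempotentElem := by
    rw [IsIdempotentElem, ← mul_kronecker_mul, Matrix.one_mul, hP.isIdempotentElem.eq]
  isSelfAdjoint := by
    rw [IsSelfAdjoint, star_eq_conjTranspose, conjTranspose_kronecker, conjTranspose_one,
      ← star_eq_conjTranspose, hP.isSelfAdjoint.star_eq]

lemma isBistochastic_luders_one_kronecker {m n N : Type*} [Fintype m] [DecidableEq m] [Fintype n]
    [DecidableEq n] [Fintype N] {P : N → Matrix n n ℂ} (hP : ∀ i, IsStarProjection (P i))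
    (hsum : ∑ i, P i = 1) : IsBistochastic (krausMap fun i => (1 : Matrix m m ℂ) ⊗ₖ P i) := by
  refine isBistochastic_luders (fun i => isStarProjection_one_kronecker (hP i)) ?_
  rw [← one_kronecker_one, ← hsum]
  exact (map_sum (kroneckerBilinear (R := ℂ) (1 : Matrix m m ℂ)) P Finset.univ).symm

theorem entropy_balance_conditional_action_general {dH dK eH eK : Type*}
    [Fintype dH] [DecidableEq dH] [Fintype dK] [DecidableEq dK]
    [Fintype eH] [DecidableEq eH] [Fintype eK] [DecidableEq eK]
    {ρ : Matrix dH dH ℂ} {σ : Matrix dK dK ℂ} (hρ : IsDensity ρ) (hσ : IsDensity σ)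
    {Φ : Matrix (dH × dK) (dH × dK) ℂ →ₗ[ℂ] Matrix (eH × eK) (eH × eK) ℂ}
    (hΦ : IsBistochastic Φ) :
    vNE ρ - vNE (ptraceK (Φ (ρ ⊗ₖ σ))) ≤ vNE (ptraceH (Φ (ρ ⊗ₖ σ))) - vNE σ := by
  have hρσ := hρ.kronecker hσ
  have : vNE ρ + vNE σ ≤ vNE (ptraceK (Φ (ρ ⊗ₖ σ))) + vNE (ptraceH (Φ (ρ ⊗ₖ σ))) := by
    calc vNE ρ + vNE σ = vNE (ρ ⊗ₖ σ) := (hρ.vNE_kronecker_eq_add hσ).symm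
      _ ≤ vNE (Φ (ρ ⊗ₖ σ)) := hΦ.vNE_le_vNE_map hρσ.1
      _ ≤ _ := vNE_le_vNE_ptraceK_add_vNE_ptraceH (hΦ.isDensity_map hρσ)
  linarith

theorem entropy_balance_conditional_action
    {dH dK N : Type*} [Fintype dH] [DecidableEq dH] [Fintype dK] [DecidableEq dK] [Fintype N]
    (ρ : Matrix dH dH ℂ) (σ : Matrix dK dK ℂ)
    (hρ : IsDensity ρ) (hσ : IsDensity σ)
    (V : Matrix (dH × dK) (dH × dK) ℂ) (hV : V * Vᴴ = 1 ∧ Vᴴ * V = 1)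
    (Q : N → Matrix dK dK ℂ)
    (hQherm : ∀ n, (Q n).IsHermitian)
    (hQproj : ∀ n, Q n * Q n = Q n)
    (hQorth : ∀ n m, n ≠ m → Q n * Q m = 0)
    (hQsum : ∑ n, Q n = 1)
    (ρ₁₂ : Matrix (dH × dK) (dH × dK) ℂ)
    (hρ₁₂ : ρ₁₂ = ∑ n, ((1 : Matrix dH dH ℂ) ⊗ₖ Q n) * (V * (ρ ⊗ₖ σ) * Vᴴ) *
        ((1 : Matrix dH dH ℂ) ⊗ₖ Q n)) :
    vNE ρ - vNE (ptraceK ρ₁₂) ≤ vNE (ptraceH ρ₁₂) - vNE σ := by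
  have hΦ := (isBistochastic_luders_one_kronecker (m := dH) (fun n => ⟨hQproj n, hQherm n⟩)
    hQsum).comp (isBistochastic_unitary_conj (mem_unitaryGroup_iff.2 hV.1))
  simpa [krausMap_apply, conjTranspose_kronecker, fun n => (hQherm n).eq, ← hρ₁₂] using
    entropy_balance_conditional_action_general hρ hσ hΦ
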